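/- For every 2×2 complex matrix x, 2·Tr(x²·xᵀ) − 2·Tr(x·xᵀ)·Tr(x) + Tr(x)³ − Tr(x²)·Tr(x) = 0. -/

import Mathlib

open Matrix

section CardEqTwo

variable {n R : Type*} [Fintype n] [CommRing R]

theorem mul_self_of_card_eq_two [DecidableEq n] (hn : Fintype.card n = 2)
    (x : Matrix n n R) :
    x * x = x.trace • x - x.det • (1 : Matrix n n R) := by
  nontriviality R
  have cayley_hamilton : x ^ 2 - x.trace • x + x.det • (1 : Matrix n n R) = 0 := by
    simpa only [x.charpoly_of_card_eq_two hn, map_add, map_sub, map_mul, map_pow,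
      Polynomial.aeval_X, Polynomial.aeval_C, Algebra.algebraMap_eq_smul_one, smul_mul_assoc,
      one_mul] using x.aeval_self_charpoly
  rwa [pow_two, sub_add, sub_eq_zero] at cayley_hamilton

theorem trace_mul_self_mul_of_card_eq_two [DecidableEq n] (hn : Fintype.card n = 2)
    (x y : Matrix n n R) :
    (x * x * y).trace = x.trace * (x * y).trace - x.det * y.trace := by
  simp only [mul_self_of_card_eq_two hn, sub_mul, smul_mul_assoc, one_mul, trace_sub,
    trace_smul, smul_eq_mul]

theorem trace_mul_self_of_card_eq_two [DecidableEq n] (hn : Fintype.card n = 2)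
    (x : Matrix n n R) :
    (x * x).trace = x.trace ^ 2 - 2 * x.det := by
  simpa only [mul_one, trace_one, hn, Nat.cast_ofNat, ← pow_two, mul_comm x.det] using
    trace_mul_self_mul_of_card_eq_two hn x 1

-- Multiply Cayley–Hamilton by `y`, take traces, and eliminate `det x` by the case `y = 1`.
theorem trace_relation_two_general (hn : Fintype.card n = 2) (x y : Matrix n n R) :
    2 * (x * x * y).trace - 2 * (x * y).trace * x.trace + x.trace ^ 2 * y.trace
      - (x * x).trace * y.trace = 0 := by
  classical
  rw [trace_mul_self_mul_of_card_eq_two hn, trace_mul_self_of_card_eq_two hn]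
  ring

end CardEqTwo

/-- For every 2×2 complex matrix `x`,
`2·Tr(x²·xᵀ) − 2·Tr(x·xᵀ)·Tr(x) + Tr(x)³ − Tr(x²)·Tr(x) = 0`. -/
theorem trace_relation_two (x : Matrix (Fin 2) (Fin 2) ℂ) :
    2 * (x * x * xᵀ).trace - 2 * (x * xᵀ).trace * x.trace + x.trace ^ 3
      - (x * x).trace * x.trace = 0 := by
  simpa only [trace_transpose, ← pow_succ] using
    trace_relation_two_general (Fintype.card_fin 2) x xᵀ
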